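/- Let χ_n be the Gram matrix of the Euler pairing of the exceptional collection O_{ℓ_1}(−1),...,O_{ℓ_n}(−1), O(−2h), O(−h) on dP_n: the (n+2)×(n+2) upper unitriangular matrix with χ(i, n+1) = χ(i, n+2) = −1 for 1 ≤ i ≤ n, χ(n+1, n+2) = 3, other off-diagonal entries zero. Then the characteristic polynomial of S_n = χ_n^{-1} χ_n^T is (λ−1)^n (λ^2 + (7−n)λ + 1). -/

import Mathlib

open Matrix

open Polynomial

/-!
Since `χ S = χᵀ`, the characteristic polynomial of `S` is `det (X χ - χᵀ)` when `det χ = 1`. The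
first `n` objects of the collection are orthonormal, so this determinant has the scalar block
`(X - 1) I` in its upper left corner, and eliminating that block leaves a `2 × 2` determinant. To
stay division-free, the elimination is done after multiplying by powers of `X - 1`, which are
cancelled at the end because `X - 1` is monic.
-/

section Determinant

variable {R m n : Type*} [CommRing R] [Fintype m] [DecidableEq m] [Fintype n] [DecidableEq n]

theorem pow_card_mul_det_fromBlocks_smul_one (a : R) (B : Matrix m n R) (C : Matrix n m R)
    (D : Matrix n n R) :
    a ^ Fintype.card n * (fromBlocks (a • 1) B C D).det =
      a ^ Fintype.card m * (a • D - C * B).det := by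
  have elimination : fromBlocks 1 0 (-C) (a • 1) * fromBlocks (a • 1) B C D =
      fromBlocks (a • 1) B 0 (a • D - C * B) := by
    simp [fromBlocks_multiply, neg_add_eq_sub]
  simpa [det_fromBlocks_zero₁₂, det_fromBlocks_zero₂₁] using congr_arg det elimination

theorem C_det_mul_charpoly_inv_mul {A : Matrix n n R} (hA : IsUnit A.det) (B : Matrix n n R) :
    C A.det * (A⁻¹ * B).charpoly = ((X : R[X]) • A.map C - B.map C).det := by
  have pencil : A.map C * charmatrix (A⁻¹ * B) = (X : R[X]) • A.map C - B.map C := by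
    rw [charmatrix, mul_sub, RingHom.mapMatrix_apply, ← Matrix.map_mul,
      mul_nonsing_inv_cancel_left _ _ hA, scalar_apply, ← smul_one_eq_diagonal,
      Matrix.mul_smul, Matrix.mul_one]
  rw [charpoly, ← pencil, det_mul, ← RingHom.mapMatrix_apply, ← RingHom.map_det]

end Determinant

section Serre

variable {R m n : Type*} [CommRing R] [Fintype m] [DecidableEq m] [Fintype n] [DecidableEq n]

/-- The matrix of the Serre operator of a bilinear form with invertible Gram matrix `χ`: the
solution `S` of `χ(x, y) = χ(y, S x)`, with the convention `χ(x, y) = xᵀ χ y`. -/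
noncomputable def serreMatrix (χ : Matrix n n R) : Matrix n n R := χ⁻¹ * χᵀ

theorem charpoly_serreMatrix_reindex (e : m ≃ n) (χ : Matrix m m R) :
    (serreMatrix (reindex e e χ)).charpoly = (serreMatrix χ).charpoly := by
  rw [← charpoly_reindex e (serreMatrix χ), serreMatrix, serreMatrix, inv_reindex,
    transpose_reindex]
  simp only [reindex_apply, submatrix_mul_equiv]

theorem X_sub_one_pow_mul_charpoly_serreMatrix_fromBlocks (B : Matrix m n R) {T : Matrix n n R}
    (hT : IsUnit T.det) :
    (X - 1) ^ Fintype.card n * (C T.det * (serreMatrix (fromBlocks 1 B 0 T)).charpoly) =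
      (X - 1) ^ Fintype.card m *
        ((X - 1 : R[X]) • ((X : R[X]) • T.map C - Tᵀ.map C) + (X : R[X]) • (Bᵀ * B).map C).det := by
  have hdet : (fromBlocks 1 B 0 T).det = T.det := by
    rw [det_fromBlocks_zero₂₁, det_one, one_mul]
  have pencil : (X : R[X]) • (fromBlocks 1 B 0 T).map C - (fromBlocks 1 B 0 T)ᵀ.map C =
      fromBlocks ((X - 1 : R[X]) • 1) ((X : R[X]) • B.map C) (-Bᵀ.map C)
        ((X : R[X]) • T.map C - Tᵀ.map C) := by
    simp [fromBlocks_transpose, fromBlocks_map, fromBlocks_smul, sub_eq_add_neg, fromBlocks_neg,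
      fromBlocks_add, add_smul]
  rw [serreMatrix, ← hdet, C_det_mul_charpoly_inv_mul (hdet ▸ hT), pencil,
    pow_card_mul_det_fromBlocks_smul_one, Matrix.mul_smul, Matrix.neg_mul, smul_neg,
    sub_neg_eq_add, Matrix.map_mul]

theorem det_smul_pencil_add_smul_const (a s : R) :
    ((X - 1 : R[X]) • ((X : R[X]) • !![1, a; 0, 1].map C - !![1, a; 0, 1]ᵀ.map C) +
      (X : R[X]) • (of fun _ _ => s).map C).det =
      (X - 1) ^ 2 * ((X - 1) ^ 2 + C (a ^ 2 + (2 - a) * s) * X) := by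
  calc
    _ = !![(X - 1) ^ 2 + C s * X, C a * X * (X - 1) + C s * X;
          C s * X - C a * (X - 1), (X - 1) ^ 2 + C s * X].det := by
      congr 1
      ext1 i j
      fin_cases i <;> fin_cases j <;> simp <;> ring
    _ = _ := by
      simp only [det_fin_two_of, map_add, map_sub, map_mul, map_pow, map_ofNat]
      ring

theorem charpoly_serreMatrix_fromBlocks_replicateCol (b : m → R) (a : R) :
    (serreMatrix (fromBlocks 1 (replicateCol (Fin 2) b) 0 !![1, a; 0, 1])).charpoly =
      (X - 1) ^ Fintype.card m * ((X - 1) ^ 2 + C (a ^ 2 + (2 - a) * (b ⬝ᵥ b)) * X) := by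
  have regular : IsRegular ((X - 1 : R[X]) ^ 2) := ((monic_X_sub_C 1).pow 2).isRegular
  have hdet : !![1, a; 0, 1].det = 1 := by simp
  have reduced := X_sub_one_pow_mul_charpoly_serreMatrix_fromBlocks (replicateCol (Fin 2) b)
    (T := !![1, a; 0, 1]) (by simp)
  rw [hdet, C_1, one_mul, transpose_replicateCol, replicateRow_mul_replicateCol,
    det_smul_pencil_add_smul_const, Fintype.card_fin, mul_left_comm] at reduced
  exact regular.left reduced

end Serre

section DelPezzo

variable (R : Type*) [CommRing R] (n : ℕ)

/-- The Gram matrix `χ_n` of the Euler pairing of the exceptional collection on `dP_n`, over an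
arbitrary coefficient ring and for arbitrary `n`; indices are shifted to start from `0`. -/
def eulerGram : Matrix (Fin (n + 2)) (Fin (n + 2)) R :=
  of fun i j =>
    if i = j then 1
    else if i.val < n ∧ (j.val = n ∨ j.val = n + 1) then -1
    else if i.val = n ∧ j.val = n + 1 then 3
    else 0

theorem eulerGram_eq_reindex_fromBlocks :
    eulerGram R n = reindex finSumFinEquiv finSumFinEquiv
      (fromBlocks 1 (replicateCol (Fin 2) fun _ => -1) 0 !![1, 3; 0, 1]) := by
  rw [← Equiv.symm_apply_eq]
  ext (i | i) (j | j)
  · have := j.isLt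
    simp [eulerGram, one_apply, this.ne, (this.trans n.lt_succ_self).ne]
  · have := i.isLt
    fin_cases j <;> simp [eulerGram, Fin.ext_iff, this.ne, (this.trans n.lt_succ_self).ne]
  · have := j.isLt
    fin_cases i <;>
      simp [eulerGram, Fin.ext_iff, this.ne, this.ne', (this.trans n.lt_succ_self).ne,
        (this.trans n.lt_succ_self).ne']
  · fin_cases i <;> fin_cases j <;> simp [eulerGram, Fin.ext_iff]

theorem stmt9_general :
    (serreMatrix (eulerGram R n)).charpoly =
      (X - 1) ^ n * (X ^ 2 + C ((7 : R) - n) * X + 1) := by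
  rw [eulerGram_eq_reindex_fromBlocks, charpoly_serreMatrix_reindex,
    charpoly_serreMatrix_fromBlocks_replicateCol, Fintype.card_fin]
  have norm_sq : (fun _ : Fin n => (-1 : R)) ⬝ᵥ (fun _ => -1) = n := by simp [dotProduct]
  rw [norm_sq]
  congr 1
  simp only [map_add, map_sub, map_mul, map_pow, map_natCast, map_ofNat]
  ring

end DelPezzo

/-- For `1 ≤ n ≤ 8`, the Gram matrix `χ_n` of the Euler pairing of the exceptional
collection `O_{ℓ_1}(-1),...,O_{ℓ_n}(-1), O(-2h), O(-h)` on `dP_n` (the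
`(n+2) × (n+2)` upper unitriangular matrix with `χ(i, n+1) = χ(i, n+2) = -1` for
`i ≤ n` and `χ(n+1, n+2) = 3`) gives a Serre operator `S_n = χ_n⁻¹ χ_nᵀ` with
characteristic polynomial `(λ-1)^n (λ² + (7-n)λ + 1)`. -/
theorem stmt9 (n : ℕ) (h1 : 1 ≤ n) (h8 : n ≤ 8) :
    let χ : Matrix (Fin (n + 2)) (Fin (n + 2)) ℚ :=
      Matrix.of fun i j =>
        if i = j then 1
        else if i.val < n ∧ (j.val = n ∨ j.val = n + 1) then -1
        else if i.val = n ∧ j.val = n + 1 then 3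
        else 0
    let S := χ⁻¹ * χᵀ
    S.charpoly = (X - 1) ^ n * (X ^ 2 + C ((7 : ℚ) - n) * X + 1) :=
  stmt9_general ℚ n
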